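/- Let >₁ and >₂ be two control orders on the monomials of A = K[x₁,…,xₙ], with multiplicative sets S₁ := {1+g : g = 0 or lt₁(g) <₁ 1} and S₂ := {1+g : g = 0 or lt₂(g) <₂ 1}. Then (S₁⁻¹I)^c = (S₂⁻¹I)^c for every ideal I ⊆ A if and only if every variable has the same characteristic under >₁ and >₂, i.e., for each i, x_i <₁ 1 if and only if x_i <₂ 1. -/

import Mathlib

open scoped Classical

noncomputable section

/-- A semigroup order on monomials: a strict total order on exponent vectors (written
additively; the monomial `1` corresponds to `0`) compatible with multiplication. -/
def IsSemigroupOrder {σ : Type*} (lt : (σ →₀ ℕ) → (σ →₀ ℕ) → Prop) : Prop :=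
  IsStrictTotalOrder (σ →₀ ℕ) lt ∧ ∀ a b c : σ →₀ ℕ, lt a b → lt (c + a) (c + b)

/-- The variable `i` is local for the order `lt`, i.e. `x_i < 1`. -/
def IsLocalVar {σ : Type*} (lt : (σ →₀ ℕ) → (σ →₀ ℕ) → Prop) (i : σ) : Prop :=
  lt (Finsupp.single i 1) 0

/-- A control order: a semigroup order under which every monomial divisible by a local
variable is `< 1`. -/
def IsControlOrder {σ : Type*} (lt : (σ →₀ ℕ) → (σ →₀ ℕ) → Prop) : Prop :=
  IsSemigroupOrder lt ∧ ∀ m : σ →₀ ℕ, (∃ i, IsLocalVar lt i ∧ m i ≠ 0) → lt m 0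

/-- `m` is the leading monomial of `g` w.r.t. `lt`. -/
def IsLeadingMonomial {K : Type*} [CommSemiring K] {σ : Type*}
    (lt : (σ →₀ ℕ) → (σ →₀ ℕ) → Prop) (g : MvPolynomial σ K) (m : σ →₀ ℕ) : Prop :=
  m ∈ g.support ∧ ∀ m' ∈ g.support, m' ≠ m → lt m' m

/-- The multiplicative set `S = {1 + g : g = 0 or lt(g) < 1}`. -/
def SDen (K : Type*) [CommSemiring K] {σ : Type*}
    (lt : (σ →₀ ℕ) → (σ →₀ ℕ) → Prop) : Set (MvPolynomial σ K) :=
  {f | ∃ g : MvPolynomial σ K, f = 1 + g ∧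
    (g = 0 ∨ ∃ m, IsLeadingMonomial lt g m ∧ lt m 0)}

/-- `I = ⋂ i ∈ s, Q i` is a minimal primary decomposition: every `Q i` is primary, the
radicals are pairwise distinct, and no component contains the intersection of the others. -/
def MinPrimDecOn {R : Type*} [CommRing R] {ι : Type*} (I : Ideal R) (Q : ι → Ideal R)
    (s : Finset ι) : Prop :=
  I = ⨅ i ∈ s, Q i ∧ (∀ i ∈ s, (Q i).IsPrimary) ∧
    (∀ i ∈ s, ∀ j ∈ s, (Q i).radical = (Q j).radical → i = j) ∧
    ∀ i ∈ s, ¬ (⨅ j ∈ s.erase i, Q j) ≤ Q i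

/-- The extraction determined by the decomposition `Q` (over `s`) and the ideal `J`:
the intersection of those components `Q i` with `Q i + J ≠ A` (which is `⊤` = the whole
ring when there are no such components). -/
def extractionFrom {R : Type*} [CommRing R] {ι : Type*} (J : Ideal R) (Q : ι → Ideal R)
    (s : Finset ι) : Ideal R :=
  ⨅ i ∈ s.filter (fun i => Q i ⊔ J ≠ ⊤), Q i

/-- `B` is the extraction `β(I,J)` of `I` by `J`. -/
def IsExtraction {R : Type*} [CommRing R] (I J B : Ideal R) : Prop :=
  ∃ (k : ℕ) (Q : Fin k → Ideal R), MinPrimDecOn I Q Finset.univ ∧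
    B = extractionFrom J Q Finset.univ

/-- `t ⊆ s` determines an isolated set of primes of the decomposition `Q` over `s`. -/
def IsIsolatedOn {R : Type*} [CommRing R] {ι : Type*} (Q : ι → Ideal R)
    (s t : Finset ι) : Prop :=
  t ⊆ s ∧ ∀ j ∈ s, (∃ i ∈ t, (Q j).radical ≤ (Q i).radical) → j ∈ t

/-- The lifted ideal `W' = ⟨W, t₁ - g₁, …, t_s - g_s⟩ ⊆ A' = K[x₁,…,xₙ,t₁,…,t_s]`. -/
def liftIdeal {K : Type*} [CommRing K] {n s : ℕ} (g : Fin s → MvPolynomial (Fin n) K)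
    (W : Ideal (MvPolynomial (Fin n) K)) : Ideal (MvPolynomial (Fin n ⊕ Fin s) K) :=
  W.map (MvPolynomial.rename (Sum.inl : Fin n → Fin n ⊕ Fin s)).toRingHom ⊔
    Ideal.span (Set.range fun w : Fin s =>
      (MvPolynomial.X (Sum.inr w) : MvPolynomial (Fin n ⊕ Fin s) K) -
        MvPolynomial.rename (Sum.inl : Fin n → Fin n ⊕ Fin s) (g w))

/-- The substitution homomorphism `φ : A' → A`, fixing each `x_i` and sending `t_w ↦ g_w`. -/
def substHom {K : Type*} [CommRing K] {n s : ℕ} (g : Fin s → MvPolynomial (Fin n) K) :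
    MvPolynomial (Fin n ⊕ Fin s) K →ₐ[K] MvPolynomial (Fin n) K :=
  MvPolynomial.aeval (Sum.elim MvPolynomial.X g)

/-!
Under a control order `m < 1` holds exactly for the monomials `m` divisible by a local variable.
Hence `S = 1 + J`, where `J` is the ideal generated by the local variables, and `S` depends only on
which variables are local. Conversely, the contraction of `S⁻¹I` is the whole ring iff `I + J` is,
and `I = ⟨1 + x_i⟩` tests whether `x_i` is local: if it is not, then `I` and `J` both vanish at the
point with `i`-th coordinate `-1` and all others `0`.
-/

namespace IsSemigroupOrder

variable {σ : Type*} {lt : (σ →₀ ℕ) → (σ →₀ ℕ) → Prop}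

theorem not_add_lt_zero (h : IsSemigroupOrder lt) {a b : σ →₀ ℕ} (ha : ¬ lt a 0)
    (hb : ¬ lt b 0) : ¬ lt (a + b) 0 := by
  have := h.1
  intro hab
  rcases trichotomous_of lt b 0 with hb' | rfl | hb'
  · exact hb hb'
  · exact ha (by rwa [add_zero] at hab)
  · have a_lt_add : lt a (a + b) := by simpa only [add_zero] using h.2 0 b a hb'
    exact ha (_root_.trans a_lt_add hab)

/-- The additive submonoid of exponents of monomials `≥ 1`. Since the order is total, `m ≥ 1` is
encoded as `¬ m < 1`. -/
def nonnegSubmonoid (h : IsSemigroupOrder lt) : AddSubmonoid (σ →₀ ℕ) where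
  carrier := {m | ¬ lt m 0}
  zero_mem' := have := h.1; irrefl_of lt 0
  add_mem' := h.not_add_lt_zero

theorem exists_isLocalVar_of_lt_zero (h : IsSemigroupOrder lt) {m : σ →₀ ℕ} (hm : lt m 0) :
    ∃ i, IsLocalVar lt i ∧ m i ≠ 0 := by
  by_contra! no_local
  suffices m ∈ h.nonnegSubmonoid from this hm
  rw [← m.sum_single]
  refine sum_mem fun i hi => ?_
  have X_nonneg : Finsupp.single i 1 ∈ h.nonnegSubmonoid := fun hlocal =>
    Finsupp.mem_support_iff.mp hi (no_local i hlocal)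
  simpa using nsmul_mem X_nonneg (m i)

end IsSemigroupOrder

theorem IsControlOrder.lt_zero_iff {σ : Type*} {lt : (σ →₀ ℕ) → (σ →₀ ℕ) → Prop}
    (h : IsControlOrder lt) {m : σ →₀ ℕ} : lt m 0 ↔ ∃ i, IsLocalVar lt i ∧ m i ≠ 0 :=
  ⟨h.1.exists_isLocalVar_of_lt_zero, h.2 m⟩

theorem exists_mem_forall_ne_rel {α : Type*} (r : α → α → Prop) [IsStrictTotalOrder α r]
    {s : Finset α} (hs : s.Nonempty) : ∃ a ∈ s, ∀ b ∈ s, b ≠ a → r b a := by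
  let : LinearOrder α := linearOrderOfSTO r
  exact ⟨s.max' hs, s.max'_mem hs, fun b hb hne => (s.le_max' b hb).lt_of_ne hne⟩

section Denominators

variable {K σ : Type*} {lt : (σ →₀ ℕ) → (σ →₀ ℕ) → Prop}

theorem exists_isLeadingMonomial [CommSemiring K] [IsStrictTotalOrder (σ →₀ ℕ) lt]
    {g : MvPolynomial σ K} (hg : g ≠ 0) : ∃ m, IsLeadingMonomial lt g m :=
  exists_mem_forall_ne_rel lt (MvPolynomial.support_nonempty.mpr hg)

theorem IsLeadingMonomial.lt_zero_iff [CommSemiring K] [IsStrictTotalOrder (σ →₀ ℕ) lt]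
    {g : MvPolynomial σ K} {m : σ →₀ ℕ} (hm : IsLeadingMonomial lt g m) :
    lt m 0 ↔ ∀ m' ∈ g.support, lt m' 0 := by
  refine ⟨fun hm0 m' hm' => ?_, fun hg => hg m hm.1⟩
  by_cases heq : m' = m
  · rwa [heq]
  · exact _root_.trans (hm.2 m' hm' heq) hm0

theorem mem_SDen_iff_support [CommRing K] [IsStrictTotalOrder (σ →₀ ℕ) lt]
    {f : MvPolynomial σ K} : f ∈ SDen K lt ↔ ∀ m ∈ (f - 1).support, lt m 0 := by
  constructor
  · rintro ⟨g, rfl, rfl | ⟨m, hm, hm0⟩⟩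
    · simp
    · rw [add_sub_cancel_left]
      exact hm.lt_zero_iff.mp hm0
  · intro hf
    refine ⟨f - 1, (add_sub_cancel 1 f).symm, or_iff_not_imp_left.mpr fun hne => ?_⟩
    obtain ⟨m, hm⟩ := exists_isLeadingMonomial (lt := lt) hne
    exact ⟨m, hm, hm.lt_zero_iff.mpr hf⟩

variable (K lt) in
/-- The ideal generated by the local variables. For a control order, `SDen` is its coset of `1`. -/
def localVarIdeal [CommSemiring K] : Ideal (MvPolynomial σ K) :=
  Ideal.span (MvPolynomial.X '' {i | IsLocalVar lt i})

theorem IsControlOrder.SDen_eq [CommRing K] (h : IsControlOrder lt) :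
    SDen K lt = {f | f - 1 ∈ localVarIdeal K lt} := by
  have := h.1.1
  ext f
  simp only [mem_SDen_iff_support, h.lt_zero_iff, localVarIdeal, Set.mem_ofPred_eq,
    MvPolynomial.mem_ideal_span_X_image]

end Denominators

theorem comap_map_algebraMap_eq_top_iff_sup_eq_top {R : Type*} (L : Type*) [CommRing R]
    [CommRing L] [Algebra R L] {S : Submonoid R} [IsLocalization S L] {J : Ideal R}
    (hS : (S : Set R) = {f | f - 1 ∈ J}) (I : Ideal R) :
    (I.map (algebraMap R L)).comap (algebraMap R L) = ⊤ ↔ I ⊔ J = ⊤ := by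
  rw [Ideal.comap_eq_top_iff, ← not_ne_iff,
    IsLocalization.map_algebraMap_ne_top_iff_disjoint S, hS, Set.not_disjoint_iff,
    Ideal.eq_top_iff_one, Submodule.mem_sup]
  constructor
  · rintro ⟨s, hsJ, hsI⟩
    exact ⟨s, hsI, 1 - s, by simpa using J.neg_mem hsJ, add_sub_cancel s 1⟩
  · rintro ⟨s, hsI, j, hj, hsj⟩
    exact ⟨s, by simpa [← hsj] using hj, hsI⟩

theorem span_one_add_X_sup_span_X_image_eq_top_iff {K σ : Type*} [CommRing K] [Nontrivial K]
    {i : σ} {s : Set σ} :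
    Ideal.span {1 + MvPolynomial.X i} ⊔
      Ideal.span (MvPolynomial.X '' s : Set (MvPolynomial σ K)) = ⊤ ↔ i ∈ s := by
  constructor
  · intro htop
    by_contra hi
    let evalPoint : MvPolynomial σ K →+* K := MvPolynomial.eval (Pi.single i (-1))
    have le_ker : Ideal.span {1 + MvPolynomial.X i} ⊔
        Ideal.span (MvPolynomial.X '' s) ≤ RingHom.ker evalPoint := by
      refine sup_le ?_ ?_ <;> rw [Ideal.span_le]
      · simp [evalPoint]
      · rintro _ ⟨j, hj, rfl⟩
        have hji : j ≠ i := ne_of_mem_of_not_mem hj hi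
        simp [evalPoint, hji]
    exact RingHom.ker_ne_top evalPoint (top_le_iff.mp (htop ▸ le_ker))
  · intro hi
    refine (Ideal.eq_top_iff_one _).mpr (Submodule.mem_sup.mpr ?_)
    exact ⟨1 + MvPolynomial.X i, Ideal.mem_span_singleton_self _, -MvPolynomial.X i,
      neg_mem (Ideal.subset_span ⟨i, hi, rfl⟩), add_neg_cancel_right _ _⟩

theorem isLocalVar_iff_comap_map_span_one_add_X_eq_top {K σ : Type*} [CommRing K] [Nontrivial K]
    {lt : (σ →₀ ℕ) → (σ →₀ ℕ) → Prop} (h : IsControlOrder lt) {S : Submonoid (MvPolynomial σ K)}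
    (hS : (S : Set (MvPolynomial σ K)) = SDen K lt) (i : σ) :
    IsLocalVar lt i ↔
      ((Ideal.span {1 + MvPolynomial.X i}).map
          (algebraMap (MvPolynomial σ K) (Localization S))).comap
        (algebraMap (MvPolynomial σ K) (Localization S)) = ⊤ := by
  rw [comap_map_algebraMap_eq_top_iff_sup_eq_top _ (hS.trans h.SDen_eq), localVarIdeal,
    span_one_add_X_sup_span_X_image_eq_top_iff, Set.mem_ofPred_eq]

theorem stmt_2_general {K σ : Type*} [CommRing K] [Nontrivial K]
    (lt₁ lt₂ : (σ →₀ ℕ) → (σ →₀ ℕ) → Prop)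
    (h₁ : IsControlOrder lt₁) (h₂ : IsControlOrder lt₂)
    (S₁ S₂ : Submonoid (MvPolynomial σ K))
    (hS₁ : (S₁ : Set (MvPolynomial σ K)) = SDen K lt₁)
    (hS₂ : (S₂ : Set (MvPolynomial σ K)) = SDen K lt₂) :
    (∀ I : Ideal (MvPolynomial σ K),
        (I.map (algebraMap (MvPolynomial σ K) (Localization S₁))).comap
            (algebraMap (MvPolynomial σ K) (Localization S₁)) =
          (I.map (algebraMap (MvPolynomial σ K) (Localization S₂))).comap
            (algebraMap (MvPolynomial σ K) (Localization S₂))) ↔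
      ∀ i : σ, (IsLocalVar lt₁ i ↔ IsLocalVar lt₂ i) := by
  constructor
  · intro contractions_eq i
    rw [isLocalVar_iff_comap_map_span_one_add_X_eq_top h₁ hS₁,
      isLocalVar_iff_comap_map_span_one_add_X_eq_top h₂ hS₂, contractions_eq]
  · intro local_iff I
    have ideals_eq : localVarIdeal K lt₁ = localVarIdeal K lt₂ := by
      simp only [localVarIdeal, local_iff]
    obtain rfl : S₁ = S₂ := SetLike.coe_injective <| by
      rw [hS₁, hS₂, h₁.SDen_eq, h₂.SDen_eq, ideals_eq]
    rfl

/-- two control orders give the same contracted localization for all ideals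
iff every variable has the same characteristic under both. -/
theorem stmt_2 {K : Type*} [Field K] {n : ℕ}
    (lt₁ lt₂ : (Fin n →₀ ℕ) → (Fin n →₀ ℕ) → Prop)
    (h₁ : IsControlOrder lt₁) (h₂ : IsControlOrder lt₂)
    (S₁ S₂ : Submonoid (MvPolynomial (Fin n) K))
    (hS₁ : (S₁ : Set (MvPolynomial (Fin n) K)) = SDen K lt₁)
    (hS₂ : (S₂ : Set (MvPolynomial (Fin n) K)) = SDen K lt₂) :
    (∀ I : Ideal (MvPolynomial (Fin n) K),
        (I.map (algebraMap (MvPolynomial (Fin n) K) (Localization S₁))).comap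
            (algebraMap (MvPolynomial (Fin n) K) (Localization S₁)) =
          (I.map (algebraMap (MvPolynomial (Fin n) K) (Localization S₂))).comap
            (algebraMap (MvPolynomial (Fin n) K) (Localization S₂))) ↔
      ∀ i : Fin n, (IsLocalVar lt₁ i ↔ IsLocalVar lt₂ i) :=
  stmt_2_general lt₁ lt₂ h₁ h₂ S₁ S₂ hS₁ hS₂
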